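/- arXiv:1810.01315 — 6 statements merged into one kernel-verified Lean document; each statement's English description precedes it below -/
import Mathlib

section
/- For every homeomorphism 𝔞 : 𝔸 → 𝔸 of the Alexandroff square, 𝔞 maps the diagonal Δ onto Δ, and 𝔞 maps the two-point set {P₁, P₃} onto {P₁, P₃}. -/
open Set

/-- The unit interval `[0,1]` with its Euclidean (subspace) topology. -/
local notation "𝕀" => unitInterval

/-- The generating family for the Alexandroff square topology on `[0,1] × [0,1]`:
sets `{x} × U` with `U` open in `𝕀` and `x ∉ U`, together with sets
`([0,1] × U) \ (F × [0,1])` with `U` open in `𝕀` and `F` finite. -/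
def alexBasis : Set (Set (𝕀 × 𝕀)) :=
  {S | (∃ (x : 𝕀) (U : Set 𝕀), IsOpen U ∧ x ∉ U ∧ S = ({x} : Set 𝕀) ×ˢ U) ∨
       (∃ (U F : Set 𝕀), IsOpen U ∧ F.Finite ∧ S = ((univ : Set 𝕀) ×ˢ U) \ (F ×ˢ (univ : Set 𝕀)))}

/-- The Alexandroff square topology. -/
def alexTop : TopologicalSpace (𝕀 × 𝕀) := TopologicalSpace.generateFrom alexBasis

/-- The diagonal. -/
def diag : Set (𝕀 × 𝕀) := {p : 𝕀 × 𝕀 | p.1 = p.2}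

def P₁ : 𝕀 × 𝕀 := (0, 0)
def P₃ : 𝕀 × 𝕀 := (1, 1)

/-!
A point of the Alexandroff square is a `Gδ` exactly when it lies off the diagonal. Off the diagonal,
`{(x, y)}` is the intersection of the open set `{x} × {x}ᶜ` with the preimage of the `Gδ` set `{y}`
under the second projection. On the diagonal, every neighbourhood of `(x, x)` contains `(z, x)`
for all but finitely many `z`, so every `Gδ` set through `(x, x)` contains `(z, x)` for all but
countably many `z`. Hence homeomorphisms preserve the diagonal. The diagonal is a copy of the
interval, and a homeomorphism between intervals is strictly monotone or antitone, so it preserves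
the pair of endpoints.
-/

open Filter Topology

variable {X Y : Type*}

theorem isGδ_homeomorph_image_iff [TopologicalSpace X] [TopologicalSpace Y] (h : X ≃ₜ Y)
    {s : Set X} : IsGδ (h '' s) ↔ IsGδ s := by
  constructor <;> intro hs
  · exact h.preimage_image s ▸ hs.preimage h.continuous
  · exact h.image_eq_preimage_symm s ▸ hs.preimage h.symm.continuous

theorem countable_compl_preimage_of_isGδ [TopologicalSpace X] {ι : Type*} {u : ι → X} {x : X}
    {s : Set X} (hu : Tendsto u cofinite (𝓝 x)) (hs : IsGδ s) (hx : x ∈ s) :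
    (u ⁻¹' s)ᶜ.Countable := by
  obtain ⟨U, hopen, rfl⟩ := isGδ_iff_eq_iInter_nat.1 hs
  rw [preimage_iInter, compl_iInter]
  refine countable_iUnion fun n => Finite.countable ?_
  exact mem_cofinite.1 (hu ((hopen n).mem_nhds (mem_iInter.1 hx n)))

theorem orderIso_image_bot_top [LE X] [BoundedOrder X] [PartialOrder Y] [BoundedOrder Y]
    (e : X ≃o Y) : e '' {⊥, ⊤} = {⊥, ⊤} := by
  rw [image_pair, e.map_bot, e.map_top]

theorem image_bot_top_of_continuous_bijective
    [ConditionallyCompleteLinearOrder X] [BoundedOrder X] [DenselyOrdered X] [TopologicalSpace X]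
    [OrderTopology X] [LinearOrder Y] [BoundedOrder Y] [TopologicalSpace Y] [OrderClosedTopology Y]
    {f : X → Y} (hf : Continuous f) (hbij : Function.Bijective f) :
    f '' {⊥, ⊤} = {⊥, ⊤} := by
  rcases hf.strictMono_of_inj hbij.injective with hmono | hanti
  · exact orderIso_image_bot_top (hmono.orderIsoOfSurjective f hbij.surjective)
  · rw [pair_comm (⊥ : Y)]
    exact orderIso_image_bot_top
      (StrictMono.orderIsoOfSurjective (β := Yᵒᵈ) f hanti hbij.surjective)

/-- The Alexandroff square of a space `X`: a type synonym of `X × X`, which keeps its topology apart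
from the product topology. -/
def AlexandroffSquare (X : Type*) : Type _ := X × X

namespace AlexandroffSquare

/-- The identification of the Alexandroff square with the underlying product. -/
def toProd : AlexandroffSquare X ≃ X × X := Equiv.refl _

/-- The diagonal embedding of `X` into its Alexandroff square; the diagonal is its range. -/
def diag (x : X) : AlexandroffSquare X := toProd.symm (x, x)

theorem mem_range_diag {p : AlexandroffSquare X} :
    p ∈ range diag ↔ (toProd p).1 = (toProd p).2 := by
  constructor
  · rintro ⟨x, rfl⟩
    rfl
  · exact fun hp => ⟨(toProd p).1, Prod.ext rfl hp⟩

variable [TopologicalSpace X] [TopologicalSpace Y]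

/-- The Alexandroff square topology, generated by the same two families as `alexTop`, which is
definitionally the case `X = [0, 1]`. -/
instance : TopologicalSpace (AlexandroffSquare X) :=
  .generateFrom
    {S | (∃ (x : X) (U : Set X), IsOpen U ∧ x ∉ U ∧ S = toProd ⁻¹' ({x} ×ˢ U)) ∨
      ∃ U F : Set X, IsOpen U ∧ F.Finite ∧ S = toProd ⁻¹' (univ ×ˢ U \ F ×ˢ univ)}

theorem isOpen_preimage_singleton_prod {x : X} {U : Set X} (hU : IsOpen U) (hx : x ∉ U) :
    IsOpen (toProd ⁻¹' ({x} ×ˢ U)) :=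
  TopologicalSpace.isOpen_generateFrom_of_mem (Or.inl ⟨x, U, hU, hx, rfl⟩)

theorem continuous_snd : Continuous fun p : AlexandroffSquare X => (toProd p).2 :=
  continuous_def.2 fun U hU => TopologicalSpace.isOpen_generateFrom_of_mem <|
    Or.inr ⟨U, ∅, hU, finite_empty, by rw [empty_prod, sdiff_empty, univ_prod]; rfl⟩

theorem continuous_diag [T1Space X] : Continuous (diag : X → AlexandroffSquare X) := by
  refine continuous_generateFrom_iff.2 ?_
  rintro S (⟨x, U, -, hx, rfl⟩ | ⟨U, F, hU, hF, rfl⟩)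
  · have hempty : diag ⁻¹' (toProd ⁻¹' ({x} ×ˢ U)) = ∅ := by
      refine eq_empty_of_forall_notMem ?_
      rintro _ ⟨rfl, ht⟩
      exact hx ht
    exact hempty ▸ isOpen_empty
  · have hdiff : diag ⁻¹' (toProd ⁻¹' (univ ×ˢ U \ F ×ˢ univ)) = U \ F := by
      ext t
      simp [diag]
    exact hdiff ▸ hU.sdiff hF.isClosed

theorem tendsto_cofinite_nhds_diag (x : X) :
    Tendsto (fun z => toProd.symm (z, x)) cofinite (𝓝 (diag x)) := by
  refine TopologicalSpace.tendsto_nhds_generateFrom_iff.2 ?_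
  rintro S (⟨y, U, -, hy, rfl⟩ | ⟨U, F, -, hF, rfl⟩) hx
  · obtain ⟨rfl, hxU⟩ := hx
    exact absurd hxU hy
  · filter_upwards [hF.compl_mem_cofinite] with z hz
    exact ⟨⟨trivial, hx.1.2⟩, fun h => hz h.1⟩

theorem not_isGδ_singleton_diag [Uncountable X] (x : X) : ¬IsGδ {diag x} := by
  intro hG
  have hcount := countable_compl_preimage_of_isGδ (tendsto_cofinite_nhds_diag x) hG rfl
  have hrow : (fun z => toProd.symm (z, x)) ⁻¹' {diag x} = {x} := by
    ext z
    simp [diag]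
  rw [hrow] at hcount
  exact not_countable_univ (compl_union_self {x} ▸ hcount.union (countable_singleton x))

theorem isGδ_singleton_of_notMem_range_diag [T1Space X] [FirstCountableTopology X]
    {p : AlexandroffSquare X} (hp : p ∉ range diag) : IsGδ {p} := by
  obtain ⟨⟨x, y⟩, rfl⟩ := toProd.symm.surjective p
  have hyx : y ≠ x := fun h => hp (mem_range_diag.2 h.symm)
  have hsplit : {toProd.symm (x, y)} =
      toProd ⁻¹' ({x} ×ˢ {x}ᶜ) ∩ (fun q => (toProd q).2) ⁻¹' {y} := by
    ext q
    constructor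
    · rintro rfl
      exact ⟨⟨rfl, hyx⟩, rfl⟩
    · exact fun hq => Prod.ext hq.1.1 hq.2
  rw [hsplit]
  exact (isOpen_preimage_singleton_prod isOpen_compl_singleton (by simp)).isGδ.inter
    ((IsGδ.singleton y).preimage continuous_snd)

theorem isGδ_singleton_iff [T1Space X] [FirstCountableTopology X] [Uncountable X]
    {p : AlexandroffSquare X} : IsGδ {p} ↔ p ∉ range diag := by
  refine ⟨?_, isGδ_singleton_of_notMem_range_diag⟩
  rintro hG ⟨x, rfl⟩
  exact not_isGδ_singleton_diag x hG

section Homeomorph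

variable [T1Space X] [FirstCountableTopology X] [Uncountable X]
  [T1Space Y] [FirstCountableTopology Y] [Uncountable Y]
  (f : AlexandroffSquare X ≃ₜ AlexandroffSquare Y)

theorem map_mem_range_diag_iff {p : AlexandroffSquare X} :
    f p ∈ range diag ↔ p ∈ range diag := by
  rw [← not_iff_not, ← isGδ_singleton_iff, ← isGδ_singleton_iff, ← image_singleton,
    isGδ_homeomorph_image_iff]

theorem image_range_diag : f '' range diag = range diag :=
  (eq_preimage_iff_image_eq f.bijective).1 <| ext fun _ => (map_mem_range_diag_iff f).symm

theorem map_diag (x : X) : f (diag x) = diag (toProd (f (diag x))).2 :=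
  Prod.ext (mem_range_diag.1 ((map_mem_range_diag_iff f).2 (mem_range_self x))) rfl

/-- The homeomorphism between the base spaces that a homeomorphism of Alexandroff squares induces
through the identification of each base space with the diagonal. -/
def diagHomeomorph : X ≃ₜ Y where
  toFun x := (toProd (f (diag x))).2
  invFun y := (toProd (f.symm (diag y))).2
  left_inv x := by simp only [← map_diag, f.symm_apply_apply]; rfl
  right_inv y := by simp only [← map_diag, f.apply_symm_apply]; rfl
  continuous_toFun := continuous_snd.comp (f.continuous.comp continuous_diag)
  continuous_invFun := continuous_snd.comp (f.symm.continuous.comp continuous_diag)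

theorem image_diag_image (s : Set X) : f '' (diag '' s) = diag '' (diagHomeomorph f '' s) :=
  image_comm (map_diag f)

end Homeomorph

end AlexandroffSquare

theorem alexandroff_homeomorph_maps_diag_and_corners_general
    [ConditionallyCompleteLinearOrder X] [BoundedOrder X] [DenselyOrdered X] [TopologicalSpace X]
    [OrderTopology X] [FirstCountableTopology X] [Uncountable X]
    [LinearOrder Y] [BoundedOrder Y] [TopologicalSpace Y] [OrderClosedTopology Y]
    [FirstCountableTopology Y] [Uncountable Y]
    (f : AlexandroffSquare X ≃ₜ AlexandroffSquare Y) :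
    f '' range AlexandroffSquare.diag = range AlexandroffSquare.diag ∧
      f '' (AlexandroffSquare.diag '' {⊥, ⊤}) = AlexandroffSquare.diag '' {⊥, ⊤} := by
  refine ⟨AlexandroffSquare.image_range_diag f, ?_⟩
  let g := AlexandroffSquare.diagHomeomorph f
  rw [AlexandroffSquare.image_diag_image,
    image_bot_top_of_continuous_bijective g.continuous g.bijective]

instance uncountable_unitInterval : Uncountable 𝕀 := by
  rw [← not_countable_iff, countable_coe_iff, Cardinal.Real.Icc_countable_iff]
  exact not_le.2 zero_lt_one

/-- Every self-homeomorphism of the Alexandroff square maps the diagonal onto the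
diagonal and the set `{P₁, P₃}` onto `{P₁, P₃}`. -/
theorem alexandroff_homeomorph_maps_diag_and_corners
    (𝔞 : @Homeomorph (𝕀 × 𝕀) (𝕀 × 𝕀) alexTop alexTop) :
    ⇑𝔞 '' diag = diag ∧ ⇑𝔞 '' {P₁, P₃} = {P₁, P₃} := by
  have hdiag : range AlexandroffSquare.diag = diag := range_diag
  have hcorners : AlexandroffSquare.diag '' {⊥, ⊤} = {P₁, P₃} := image_pair ..
  exact hdiag ▸ hcorners ▸
    alexandroff_homeomorph_maps_diag_and_corners_general (X := 𝕀) (Y := 𝕀) 𝔞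
end

section
/- Every homeomorphism 𝔞 : 𝔸 → 𝔸 of the Alexandroff square maps the set L₂ ∪ L₄ ∪ {P₂, P₄} onto itself. -/
open Set

/-- The unit interval `[0,1]` with its Euclidean (subspace) topology. -/
local notation "𝕀" => unitInterval

def P₂ : 𝕀 × 𝕀 := (0, 1)
def P₄ : 𝕀 × 𝕀 := (1, 0)
def L₂ : Set (𝕀 × 𝕀) := (Ioo (0 : 𝕀) 1) ×ˢ ({1} : Set 𝕀)
def L₄ : Set (𝕀 × 𝕀) := (Ioo (0 : 𝕀) 1) ×ˢ ({0} : Set 𝕀)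

/-!
Homeomorphisms preserve non-cut points, and those of the Alexandroff square over a connected T₁
space `X` with at least two points can be read off from `X`. Removing `(x, x)` splits `{x} × {x}ᶜ`
from the other vertical lines. Removing `(x, y)` with `x ≠ y` leaves a connected space exactly
when `{y}ᶜ` is connected: the diagonal, which is a copy of `X`, still joins the vertical lines to
each other, while the line `{x} × X` is a retract of the square. In a compact interval the non-cut
points are the endpoints.
-/

/-- The non-cut points of a space: the points whose removal does not disconnect it. The empty set
counts as connected here, so the point of a one-point space is a non-cut point. -/
def nonCutPoints (X : Type*) [TopologicalSpace X] : Set X := {x | IsPreconnected ({x}ᶜ : Set X)}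

theorem image_nonCutPoints {X Y : Type*} [TopologicalSpace X] [TopologicalSpace Y] (e : X ≃ₜ Y) :
    e '' nonCutPoints X = nonCutPoints Y := by
  ext y
  rw [e.image_eq_preimage_symm]
  change IsPreconnected {e.symm y}ᶜ ↔ IsPreconnected {y}ᶜ
  rw [← e.isPreconnected_image, image_compl_eq e.bijective, image_singleton, e.apply_symm_apply]

theorem nonCutPoints_eq_bot_top (α : Type*) [ConditionallyCompleteLinearOrder α] [BoundedOrder α]
    [DenselyOrdered α] [TopologicalSpace α] [OrderTopology α] :
    nonCutPoints α = {⊥, ⊤} := by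
  ext y
  refine ⟨fun hy => ?_, ?_⟩
  · by_contra! hne
    obtain ⟨hbot, htop⟩ : y ≠ ⊥ ∧ y ≠ ⊤ := by simpa using hne
    exact hy.ordConnected.out hbot.symm htop.symm ⟨bot_le, le_top⟩ rfl
  · rintro (rfl | rfl)
    · rw [nonCutPoints, mem_ofPred_eq, ← Ioi_bot]
      exact isPreconnected_Ioi
    · rw [nonCutPoints, mem_ofPred_eq, ← Iio_top]
      exact isPreconnected_Iio

/-- The topology of the Alexandroff square over an arbitrary space `X`, by the same generating sets
as `alexTop`, which is the case `X = 𝕀`. -/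
abbrev alexandroffTopology (X : Type*) [TopologicalSpace X] : TopologicalSpace (X × X) :=
  TopologicalSpace.generateFrom
    {S | (∃ (x : X) (U : Set X), IsOpen U ∧ x ∉ U ∧ S = {x} ×ˢ U) ∨
         (∃ U F : Set X, IsOpen U ∧ F.Finite ∧ S = (univ ×ˢ U) \ (F ×ˢ univ))}

namespace alexandroffTopology

open scoped Topology

variable {X : Type*}

open Classical in
/-- The retraction of the Alexandroff square onto the vertical line over `x`, viewed as a map to
`X`: it sends all the other vertical lines to the diagonal point `(x, x)`. -/
noncomputable def verticalRetraction (x : X) (p : X × X) : X := if p.1 = x then p.2 else x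

theorem image_verticalRetraction_compl_singleton {x y : X} (hxy : x ≠ y) :
    verticalRetraction x '' {(x, y)}ᶜ = {y}ᶜ := by
  refine Subset.antisymm ?_ fun b hb => ⟨(x, b), by simpa using hb, if_pos rfl⟩
  rintro _ ⟨⟨a, b⟩, hab, rfl⟩
  by_cases ha : a = x
  · simpa [verticalRetraction, ha] using hab
  · simpa [verticalRetraction, ha] using hxy

variable [TopologicalSpace X]

theorem isOpen_singleton_prod {x : X} {U : Set X} (hU : IsOpen U) (hx : x ∉ U) :
    IsOpen[alexandroffTopology X] ({x} ×ˢ U) :=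
  TopologicalSpace.isOpen_generateFrom_of_mem (.inl ⟨x, U, hU, hx, rfl⟩)

theorem isOpen_univ_prod {U : Set X} (hU : IsOpen U) :
    IsOpen[alexandroffTopology X] (univ ×ˢ U) :=
  TopologicalSpace.isOpen_generateFrom_of_mem (.inr ⟨U, ∅, hU, finite_empty, by simp⟩)

theorem isOpen_compl_singleton_prod_univ (x : X) :
    IsOpen[alexandroffTopology X] ({x}ᶜ ×ˢ univ) :=
  TopologicalSpace.isOpen_generateFrom_of_mem
    (.inr ⟨univ, {x}, isOpen_univ, finite_singleton x, by ext; simp⟩)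

theorem continuous_prodMk (x : X) : Continuous[_, alexandroffTopology X] (Prod.mk x) := by
  classical
  refine continuous_generateFrom_iff.2 ?_
  rintro _ (⟨a, U, hU, -, rfl⟩ | ⟨U, F, hU, -, rfl⟩)
  · rw [mk_preimage_prod_right_eq_if]
    split_ifs
    exacts [hU, isOpen_empty]
  · rw [preimage_sdiff, mk_preimage_prod_right (mem_univ x), mk_preimage_prod_right_eq_if]
    split_ifs
    exacts [hU.sdiff isClosed_univ, hU.sdiff isClosed_empty]

theorem continuous_diag [T1Space X] :
    Continuous[_, alexandroffTopology X] (fun x : X => (x, x)) := by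
  refine continuous_generateFrom_iff.2 ?_
  rintro _ (⟨x, U, -, hx, rfl⟩ | ⟨U, F, hU, hF, rfl⟩)
  · rw [mk_preimage_prod, preimage_id', preimage_id', singleton_inter_eq_empty.2 hx]
    exact isOpen_empty
  · simpa [preimage_sdiff, mk_preimage_prod] using hU.sdiff hF.isClosed

theorem continuous_verticalRetraction (x : X) :
    Continuous[alexandroffTopology X, _] (verticalRetraction x) := by
  let _ := alexandroffTopology X
  refine continuous_def.2 fun U hU => ?_
  by_cases hx : x ∈ U
  · have hpre : verticalRetraction x ⁻¹' U = univ ×ˢ U ∪ {x}ᶜ ×ˢ univ := by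
      ext p
      by_cases hp : p.1 = x <;> simp [verticalRetraction, hp, hx]
    exact hpre ▸ (isOpen_univ_prod hU).union (isOpen_compl_singleton_prod_univ x)
  · have hpre : verticalRetraction x ⁻¹' U = {x} ×ˢ U := by
      ext p
      by_cases hp : p.1 = x <;> simp [verticalRetraction, hp, hx]
    exact hpre ▸ isOpen_singleton_prod hU hx

theorem diag_notMem_nonCutPoints [T1Space X] [Nontrivial X] (x : X) :
    (x, x) ∉ @nonCutPoints (X × X) (alexandroffTopology X) := by
  let _ := alexandroffTopology X
  intro hx
  obtain ⟨a, ha⟩ := exists_ne x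
  obtain ⟨p, -, hp, hp'⟩ := hx ({x} ×ˢ {x}ᶜ) ({x}ᶜ ×ˢ univ)
    (isOpen_singleton_prod isOpen_compl_singleton (by simp)) (isOpen_compl_singleton_prod_univ x)
    (by rintro ⟨b, c⟩ hbc; by_cases hb : b = x <;> simp_all)
    ⟨(x, a), by simpa using ha⟩ ⟨(a, x), by simpa using ha⟩
  exact hp'.1 hp.1

theorem mem_nonCutPoints_of_mk_mem {x y : X} (hxy : x ≠ y)
    (h : (x, y) ∈ @nonCutPoints (X × X) (alexandroffTopology X)) : y ∈ nonCutPoints X := by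
  let _ := alexandroffTopology X
  have himage := IsPreconnected.image h _ (continuous_verticalRetraction x).continuousOn
  rwa [image_verticalRetraction_compl_singleton hxy] at himage

theorem mk_mem_nonCutPoints [T1Space X] [PreconnectedSpace X] {x y : X} (hxy : x ≠ y)
    (hy : y ∈ nonCutPoints X) : (x, y) ∈ @nonCutPoints (X × X) (alexandroffTopology X) := by
  let _ := alexandroffTopology X
  have hdiag_ne (t : X) : (t, t) ≠ (x, y) := fun h =>
    hxy ((congrArg Prod.fst h).symm.trans (congrArg Prod.snd h))
  have hdiag : IsPreconnected (range fun t : X => (t, t)) := isPreconnected_range continuous_diag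
  have hline (t : X) : IsPreconnected (Prod.mk t ⁻¹' {(x, y)}ᶜ) := by
    by_cases ht : t = x
    · have hpre : Prod.mk t ⁻¹' {(x, y)}ᶜ = {y}ᶜ := by ext; simp [ht]
      exact hpre ▸ hy
    · have hpre : Prod.mk t ⁻¹' {(x, y)}ᶜ = univ := by ext; simp [ht]
      exact hpre ▸ isPreconnected_univ
  refine isPreconnected_of_forall (x, x) ?_
  rintro ⟨t, s⟩ hts
  refine ⟨range (fun t : X => (t, t)) ∪ Prod.mk t '' (Prod.mk t ⁻¹' {(x, y)}ᶜ),
    union_subset (range_subset_iff.2 hdiag_ne) (image_preimage_subset _ _),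
    .inl ⟨x, rfl⟩, .inr ⟨s, hts, rfl⟩, ?_⟩
  exact hdiag.union (t, t) ⟨t, rfl⟩ ⟨t, hdiag_ne t, rfl⟩
    ((hline t).image _ (continuous_prodMk t).continuousOn)

variable (X) in
theorem nonCutPoints_eq_setOf [T1Space X] [PreconnectedSpace X] [Nontrivial X] :
    @nonCutPoints (X × X) (alexandroffTopology X) = {p | p.1 ≠ p.2 ∧ p.2 ∈ nonCutPoints X} := by
  ext ⟨x, y⟩
  refine ⟨fun h => ?_, fun h => mk_mem_nonCutPoints h.1 h.2⟩
  have hxy : x ≠ y := by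
    rintro rfl
    exact diag_notMem_nonCutPoints x h
  exact ⟨hxy, mem_nonCutPoints_of_mk_mem hxy h⟩

end alexandroffTopology

theorem horizontal_boundary_eq_setOf :
    L₂ ∪ L₄ ∪ {P₂, P₄} = {p : 𝕀 × 𝕀 | p.1 ≠ p.2 ∧ p.2 ∈ nonCutPoints 𝕀} := by
  have hL₂ : L₂ ∪ {P₂} = {1}ᶜ ×ˢ {1} := by
    rw [L₂, P₂, ← singleton_prod_singleton, ← union_prod, union_singleton,
      Ioo_insert_left zero_lt_one]
    exact congrArg (· ×ˢ {1}) (Ico_bot.trans Iio_top)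
  have hL₄ : L₄ ∪ {P₄} = {0}ᶜ ×ˢ {0} := by
    rw [L₄, P₄, ← singleton_prod_singleton, ← union_prod, union_singleton,
      Ioo_insert_right zero_lt_one]
    exact congrArg (· ×ˢ {0}) (Ioc_top.trans Ioi_bot)
  rw [insert_eq, union_union_union_comm, hL₂, hL₄, nonCutPoints_eq_bot_top]
  ext ⟨x, y⟩
  change (x ≠ 1 ∧ y = 1) ∨ (x ≠ 0 ∧ y = 0) ↔ x ≠ y ∧ (y = 0 ∨ y = 1)
  grind

theorem alexandroff_homeomorph_maps_horizontal_boundary_general {X Y : Type*}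
    [TopologicalSpace X] [T1Space X] [PreconnectedSpace X] [Nontrivial X]
    [TopologicalSpace Y] [T1Space Y] [PreconnectedSpace Y] [Nontrivial Y]
    (e : @Homeomorph (X × X) (Y × Y) (alexandroffTopology X) (alexandroffTopology Y)) :
    ⇑e '' {p | p.1 ≠ p.2 ∧ p.2 ∈ nonCutPoints X} = {p | p.1 ≠ p.2 ∧ p.2 ∈ nonCutPoints Y} := by
  rw [← alexandroffTopology.nonCutPoints_eq_setOf X, ← alexandroffTopology.nonCutPoints_eq_setOf Y]
  exact @image_nonCutPoints _ _ (alexandroffTopology X) (alexandroffTopology Y) e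

/-- Every self-homeomorphism of the Alexandroff square maps
`L₂ ∪ L₄ ∪ {P₂, P₄}` onto itself. -/
theorem alexandroff_homeomorph_maps_horizontal_boundary
    (𝔞 : @Homeomorph (𝕀 × 𝕀) (𝕀 × 𝕀) alexTop alexTop) :
    ⇑𝔞 '' (L₂ ∪ L₄ ∪ {P₂, P₄}) = L₂ ∪ L₄ ∪ {P₂, P₄} := by
  rw [horizontal_boundary_eq_setOf]
  exact alexandroff_homeomorph_maps_horizontal_boundary_general 𝔞
end

section
/- For every homeomorphism 𝔞 : 𝔸 → 𝔸 of the Alexandroff square, exactly one of the following holds: (a) 𝔞(Pᵢ) = Pᵢ for i = 1,2,3,4, 𝔞(L₁) = L₁ and 𝔞(L₃) = L₃; or (b) 𝔞(P₁) = P₃, 𝔞(P₂) = P₄, 𝔞(P₃) = P₁, 𝔞(P₄) = P₂, 𝔞(L₁) = L₃ and 𝔞(L₃) = L₁. -/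
open Set

/-- The unit interval `[0,1]` with its Euclidean (subspace) topology. -/
local notation "𝕀" => unitInterval

def L₁ : Set (𝕀 × 𝕀) := ({0} : Set 𝕀) ×ˢ Ioo (0 : 𝕀) 1
def L₃ : Set (𝕀 × 𝕀) := ({1} : Set 𝕀) ×ˢ Ioo (0 : 𝕀) 1

/-!
A diagonal point `(x, x)` is the limit of the points `(z, x)` along the cofinite filter on `z`, so
every `Gδ` set containing it contains all but countably many of them, and `{(x, x)}` is not `Gδ`.
Singletons off the diagonal are `Gδ`, hence every self-homeomorphism preserves the diagonal.

Off the diagonal the first coordinate is locally constant, so a homeomorphism `h` maps each of the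
two segments of `({x} × [0,1]) \ {(x, x)}` into a single vertical line; both segments accumulate
at `(x, x)`, so it is the same line. Thus `h (x, y) = (e x, e y)` for a self-homeomorphism `e` of
`[0,1]` depending on `x`, and `e` fixes or exchanges the endpoints. Injectivity of `h` forces the
same alternative at `x = 0` and at `x = 1`.
-/

open Filter Topology

section General

theorem countable_setOf_notMem_of_tendsto_cofinite {ι X : Type*} [TopologicalSpace X]
    {f : ι → X} {p : X} (hf : Tendsto f cofinite (𝓝 p)) {S : Set X} (hS : IsGδ S) (hp : p ∈ S) :
    {i | f i ∉ S}.Countable := by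
  obtain ⟨T, hT_open, hT_countable, rfl⟩ := hS
  have missing_finite : ∀ U ∈ T, {i | f i ∉ U}.Finite := fun U hU ↦
    hf ((hT_open U hU).mem_nhds (hp U hU))
  refine (hT_countable.biUnion fun U hU ↦ (missing_finite U hU).countable).mono fun i hi ↦ ?_
  simpa only [mem_sInter, mem_ofPred_eq, mem_iUnion, not_forall] using hi

theorem not_isGδ_singleton_of_tendsto_cofinite {ι X : Type*} [Uncountable ι] [TopologicalSpace X]
    {f : ι → X} (hf_inj : Function.Injective f) {p : X} (hf : Tendsto f cofinite (𝓝 p)) :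
    ¬ IsGδ ({p} : Set X) := fun hp ↦ by
  have avoiding : {i | f i ∉ ({p} : Set X)}.Countable :=
    countable_setOf_notMem_of_tendsto_cofinite hf hp rfl
  have hitting : {i | f i ∈ ({p} : Set X)}.Countable :=
    (subsingleton_singleton.preimage hf_inj).countable
  exact not_countable_univ ((hitting.union avoiding).mono fun i _ ↦ em (f i ∈ ({p} : Set X)))

theorem exists_isPreconnected_mem_closure_of_ne {α : Type*} [ConditionallyCompleteLinearOrder α]
    [TopologicalSpace α] [OrderTopology α] [DenselyOrdered α] {x y : α} (hxy : x ≠ y) :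
    ∃ S : Set α, IsPreconnected S ∧ y ∈ S ∧ x ∉ S ∧ x ∈ closure S := by
  rcases hxy.lt_or_gt with hlt | hgt
  · exact ⟨Ioi x, isPreconnected_Ioi, hlt, self_notMem_Ioi,
      (closure_Ioi' ⟨y, hlt⟩).symm ▸ self_mem_Ici⟩
  · exact ⟨Iio x, isPreconnected_Iio, hgt, self_notMem_Iio,
      (closure_Iio' ⟨y, hgt⟩).symm ▸ self_mem_Iic⟩

theorem Ioo_bot_top_eq_compl {α : Type*} [PartialOrder α] [BoundedOrder α] :
    Ioo (⊥ : α) ⊤ = {⊥, ⊤}ᶜ := by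
  ext t
  simp only [mem_Ioo, bot_lt_iff_ne_bot, lt_top_iff_ne_top, mem_compl_iff, mem_insert_iff,
    mem_singleton_iff, not_or]

variable {α β : Type*} [ConditionallyCompleteLinearOrder α] [TopologicalSpace α] [OrderTopology α]
  [DenselyOrdered α] [BoundedOrder α] [LinearOrder β] [TopologicalSpace β] [OrderClosedTopology β]
  [BoundedOrder β]

theorem homeomorph_preserves_or_swaps_bot_top (e : α ≃ₜ β) :
    (e ⊥ = ⊥ ∧ e ⊤ = ⊤) ∨ (e ⊥ = ⊤ ∧ e ⊤ = ⊥) := by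
  refine (e.continuous.strictMono_of_inj_boundedOrder' e.injective).imp (fun mono ↦ ?_)
    (fun anti ↦ ?_)
  · let φ : α ≃o β := mono.orderIsoOfSurjective e e.surjective
    exact ⟨φ.map_bot, φ.map_top⟩
  · let φ : α ≃o βᵒᵈ := StrictMono.orderIsoOfSurjective (OrderDual.toDual ∘ e) anti e.surjective
    exact ⟨φ.map_bot, φ.map_top⟩

theorem homeomorph_image_Ioo_bot_top (e : α ≃ₜ β) : e '' Ioo ⊥ ⊤ = Ioo ⊥ ⊤ := by
  rw [Ioo_bot_top_eq_compl, Ioo_bot_top_eq_compl, image_compl_eq e.bijective, image_pair]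
  rcases homeomorph_preserves_or_swaps_bot_top e with ⟨h_bot, h_top⟩ | ⟨h_bot, h_top⟩
  · rw [h_bot, h_top]
  · rw [h_bot, h_top, pair_comm]

end General

namespace alexTop

/-- From here to the end of the namespace, `𝕀 × 𝕀` carries the Alexandroff topology; being declared
later, this instance takes precedence over the product topology. -/
local instance instTopologicalSpaceSquare : TopologicalSpace (𝕀 × 𝕀) := alexTop

theorem isOpen_singleton_prod {x : 𝕀} {U : Set 𝕀} (hU : IsOpen U) (hx : x ∉ U) :
    IsOpen (({x} : Set 𝕀) ×ˢ U) :=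
  TopologicalSpace.isOpen_generateFrom_of_mem (Or.inl ⟨x, U, hU, hx, rfl⟩)

theorem isOpen_univ_prod_sdiff {U F : Set 𝕀} (hU : IsOpen U) (hF : F.Finite) :
    IsOpen ((univ : Set 𝕀) ×ˢ U \ F ×ˢ (univ : Set 𝕀)) :=
  TopologicalSpace.isOpen_generateFrom_of_mem (Or.inr ⟨U, F, hU, hF, rfl⟩)

theorem continuous_snd : Continuous (Prod.snd : 𝕀 × 𝕀 → 𝕀) where
  isOpen_preimage U hU := by
    simpa only [empty_prod, sdiff_empty, univ_prod] using isOpen_univ_prod_sdiff hU finite_empty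

theorem isClosed_singleton_prod_univ (x : 𝕀) : IsClosed (({x} : Set 𝕀) ×ˢ (univ : Set 𝕀)) := by
  rw [← isOpen_compl_iff, compl_eq_univ_sdiff, ← univ_prod_univ]
  exact isOpen_univ_prod_sdiff isOpen_univ (finite_singleton x)

theorem continuous_prodMk (x : 𝕀) : Continuous (Prod.mk x : 𝕀 → 𝕀 × 𝕀) := by
  refine continuous_generateFrom_iff.2 ?_
  rintro _ (⟨z, U, hU, -, rfl⟩ | ⟨U, F, hU, -, rfl⟩)
  · by_cases hxz : x = z <;> simp [hxz, hU]
  · by_cases hxF : x ∈ F <;> simp [hxF, hU]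

theorem tendsto_cofinite_nhds_diagonal (x : 𝕀) :
    Tendsto (fun z : 𝕀 ↦ (z, x)) cofinite (𝓝 (x, x)) := by
  refine TopologicalSpace.tendsto_nhds_generateFrom_iff.2 ?_
  rintro _ (⟨z, U, -, hz, rfl⟩ | ⟨U, F, -, hF, rfl⟩) hx
  · obtain ⟨rfl, hxU⟩ := hx
    exact absurd hxU hz
  · filter_upwards [hF.compl_mem_cofinite] with z hz
    exact ⟨⟨mem_univ z, hx.1.2⟩, fun h ↦ hz h.1⟩

theorem isGδ_singleton_of_ne {x y : 𝕀} (hxy : x ≠ y) : IsGδ ({(x, y)} : Set (𝕀 × 𝕀)) := by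
  have singleton_eq : ({(x, y)} : Set (𝕀 × 𝕀)) = {x} ×ˢ {x}ᶜ ∩ Prod.snd ⁻¹' {y} := by
    ext ⟨a, b⟩
    simp only [mem_singleton_iff, Prod.mk.injEq, mem_inter_iff, mem_prod, mem_compl_iff,
      mem_preimage]
    grind
  rw [singleton_eq]
  exact (isOpen_singleton_prod isOpen_compl_singleton (notMem_compl_iff.2 rfl)).isGδ.inter
    ((IsGδ.singleton y).preimage continuous_snd)

theorem isGδ_singleton_iff {p : 𝕀 × 𝕀} : IsGδ ({p} : Set (𝕀 × 𝕀)) ↔ p ∉ diagonal 𝕀 := by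
  have : Uncountable 𝕀 := by
    rw [← not_countable_iff]
    exact mt Cardinal.Real.Icc_countable_iff.1 zero_lt_one.not_ge
  refine ⟨?_, isGδ_singleton_of_ne⟩
  rintro hp (hdiag : p.1 = p.2)
  obtain ⟨x, y⟩ := p
  obtain rfl : x = y := hdiag
  exact not_isGδ_singleton_of_tendsto_cofinite (Prod.mk_left_injective x)
    (tendsto_cofinite_nhds_diagonal x) hp

theorem apply_mem_diagonal_iff (h : 𝕀 × 𝕀 ≃ₜ 𝕀 × 𝕀) {p : 𝕀 × 𝕀} :
    h p ∈ diagonal 𝕀 ↔ p ∈ diagonal 𝕀 := by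
  rw [← not_iff_not, ← isGδ_singleton_iff, ← isGδ_singleton_iff]
  constructor <;> intro hG
  · have : h ⁻¹' {h p} = {p} := by rw [← image_singleton, h.preimage_image]
    exact this ▸ hG.preimage h.continuous
  · have : h.symm ⁻¹' {p} = {h p} := by rw [← h.image_eq_preimage_symm, image_singleton]
    exact this ▸ hG.preimage h.symm.continuous

theorem closure_subset_singleton_prod_univ {S : Set (𝕀 × 𝕀)} (hS : IsPreconnected S)
    (hdiag : Disjoint S (diagonal 𝕀)) {p : 𝕀 × 𝕀} (hp : p ∈ S) :
    closure S ⊆ {p.1} ×ˢ univ := by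
  have off_diag : ∀ q ∈ S, q.1 ≠ q.2 := fun q hq ↦ disjoint_left.1 hdiag hq
  have subset_line : ({p.1} : Set 𝕀) ×ˢ {p.1}ᶜ ⊆ {p.1} ×ˢ univ :=
    prod_mono_right (subset_univ _)
  have S_subset : S ⊆ {p.1} ×ˢ {p.1}ᶜ := by
    refine hS.subset_of_closure_inter_subset
      (isOpen_singleton_prod isOpen_compl_singleton (notMem_compl_iff.2 rfl))
      ⟨p, hp, rfl, (off_diag p hp).symm⟩ ?_
    rintro q ⟨hq_closure, hqS⟩
    have hq : q.1 = p.1 :=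
      (closure_minimal subset_line (isClosed_singleton_prod_univ p.1) hq_closure).1
    exact ⟨hq, hq ▸ (off_diag q hqS).symm⟩
  exact closure_minimal (S_subset.trans subset_line) (isClosed_singleton_prod_univ p.1)

theorem fst_apply_eq_fst_apply_diagonal (h : 𝕀 × 𝕀 ≃ₜ 𝕀 × 𝕀) (x y : 𝕀) :
    (h (x, y)).1 = (h (x, x)).1 := by
  rcases eq_or_ne x y with rfl | hxy
  · rfl
  obtain ⟨S, hS, hyS, hxS, hx_closure⟩ := exists_isPreconnected_mem_closure_of_ne hxy
  let γ : 𝕀 → 𝕀 × 𝕀 := fun t ↦ h (x, t)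
  have γ_continuous : Continuous γ := h.continuous.comp (continuous_prodMk x)
  have disjoint_diag : Disjoint (γ '' S) (diagonal 𝕀) := by
    rw [disjoint_left, forall_mem_image]
    rintro t ht hdiag
    obtain rfl : x = t := (apply_mem_diagonal_iff h).1 hdiag
    exact hxS ht
  have γx_mem_closure : γ x ∈ closure (γ '' S) :=
    image_closure_subset_closure_image γ_continuous (mem_image_of_mem γ hx_closure)
  exact (closure_subset_singleton_prod_univ (hS.image γ γ_continuous.continuousOn) disjoint_diag
    (mem_image_of_mem γ hyS) γx_mem_closure).1.symm

/-- The homeomorphism between the vertical lines `{x} × [0,1]` and `h ({x} × [0,1])`, read in their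
second coordinates. -/
def fiberHomeomorph (h : 𝕀 × 𝕀 ≃ₜ 𝕀 × 𝕀) (x : 𝕀) : 𝕀 ≃ₜ 𝕀 where
  toFun y := (h (x, y)).2
  invFun y := (h.symm ((h (x, x)).1, y)).2
  left_inv y := by
    simp only [← fst_apply_eq_fst_apply_diagonal h x y, Prod.mk.eta, h.symm_apply_apply]
  right_inv y := by
    have diag : ((h (x, x)).1, (h (x, x)).1) = h (x, x) :=
      Prod.ext rfl ((apply_mem_diagonal_iff h).2 rfl)
    have fst_eq := fst_apply_eq_fst_apply_diagonal h.symm (h (x, x)).1 y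
    rw [diag, h.symm_apply_apply] at fst_eq
    have symm_eq : (x, (h.symm ((h (x, x)).1, y)).2) = h.symm ((h (x, x)).1, y) :=
      Prod.ext fst_eq.symm rfl
    simp only [symm_eq, h.apply_symm_apply]
  continuous_toFun := continuous_snd.comp (h.continuous.comp (continuous_prodMk x))
  continuous_invFun := continuous_snd.comp (h.symm.continuous.comp (continuous_prodMk _))

theorem apply_eq_fiberHomeomorph (h : 𝕀 × 𝕀 ≃ₜ 𝕀 × 𝕀) (x y : 𝕀) :
    h (x, y) = (fiberHomeomorph h x x, fiberHomeomorph h x y) := by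
  have diag : (h (x, x)).1 = (h (x, x)).2 := (apply_mem_diagonal_iff h).2 rfl
  exact Prod.ext ((fst_apply_eq_fst_apply_diagonal h x y).trans diag) rfl

theorem fiberHomeomorph_apply_self_injective (h : 𝕀 × 𝕀 ≃ₜ 𝕀 × 𝕀) :
    Function.Injective fun x ↦ fiberHomeomorph h x x := fun x z hxz ↦ by
  have : h (x, x) = h (z, z) := by
    simp only [apply_eq_fiberHomeomorph h x, apply_eq_fiberHomeomorph h z]
    exact congrArg₂ Prod.mk hxz hxz
  exact congrArg Prod.fst (h.injective this)

theorem image_singleton_prod_Ioo (h : 𝕀 × 𝕀 ≃ₜ 𝕀 × 𝕀) (x : 𝕀) :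
    h '' ({x} ×ˢ Ioo 0 1) = {fiberHomeomorph h x x} ×ˢ Ioo 0 1 := by
  have image_Ioo : fiberHomeomorph h x '' Ioo 0 1 = Ioo 0 1 := homeomorph_image_Ioo_bot_top _
  simp only [singleton_prod, image_image, apply_eq_fiberHomeomorph h x]
  nth_rw 2 [← image_Ioo]
  rw [image_image]

end alexTop

/-- For every self-homeomorphism of the Alexandroff square, exactly one of the following
holds: (a) it fixes each corner `Pᵢ` and maps `L₁` onto `L₁` and `L₃` onto `L₃`;
(b) it swaps `P₁ ↔ P₃`, `P₂ ↔ P₄`, and maps `L₁` onto `L₃` and `L₃` onto `L₁`. -/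
theorem alexandroff_homeomorph_corner_dichotomy
    (𝔞 : @Homeomorph (𝕀 × 𝕀) (𝕀 × 𝕀) alexTop alexTop) :
    Xor'
      (𝔞 P₁ = P₁ ∧ 𝔞 P₂ = P₂ ∧ 𝔞 P₃ = P₃ ∧ 𝔞 P₄ = P₄ ∧ ⇑𝔞 '' L₁ = L₁ ∧ ⇑𝔞 '' L₃ = L₃)
      (𝔞 P₁ = P₃ ∧ 𝔞 P₂ = P₄ ∧ 𝔞 P₃ = P₁ ∧ 𝔞 P₄ = P₂ ∧ ⇑𝔞 '' L₁ = L₃ ∧ ⇑𝔞 '' L₃ = L₁) := by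
  let e := alexTop.fiberHomeomorph 𝔞 0
  let k := alexTop.fiberHomeomorph 𝔞 1
  have he : ∀ y, 𝔞 (0, y) = (e 0, e y) := alexTop.apply_eq_fiberHomeomorph 𝔞 0
  have hk : ∀ y, 𝔞 (1, y) = (k 1, k y) := alexTop.apply_eq_fiberHomeomorph 𝔞 1
  have hL₁ : 𝔞 '' L₁ = {e 0} ×ˢ Ioo 0 1 := alexTop.image_singleton_prod_Ioo 𝔞 0
  have hL₃ : 𝔞 '' L₃ = {k 1} ×ˢ Ioo 0 1 := alexTop.image_singleton_prod_Ioo 𝔞 1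
  have e0_ne_k1 : e 0 ≠ k 1 :=
    (alexTop.fiberHomeomorph_apply_self_injective 𝔞).ne zero_ne_one
  have e_ends : (e 0 = 0 ∧ e 1 = 1) ∨ (e 0 = 1 ∧ e 1 = 0) := homeomorph_preserves_or_swaps_bot_top e
  have k_ends : (k 0 = 0 ∧ k 1 = 1) ∨ (k 0 = 1 ∧ k 1 = 0) := homeomorph_preserves_or_swaps_bot_top k
  rw [hL₁, hL₃]
  simp only [P₁, P₂, P₃, P₄, L₁, L₃, he, hk]
  rcases e_ends with ⟨e0, e1⟩ | ⟨e0, e1⟩ <;> rcases k_ends with ⟨k0, k1⟩ | ⟨k0, k1⟩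
  · exact Or.inl (by simp [e0, e1, k0, k1])
  · exact absurd (e0.trans k1.symm) e0_ne_k1
  · exact absurd (e0.trans k1.symm) e0_ne_k1
  · exact Or.inr (by simp [e0, e1, k0, k1])
end

section
/- Every homeomorphism 𝔬 : 𝕆 → 𝕆 of the lexicographically ordered square is either order preserving or order reversing with respect to the lexicographic order. -/
open Set

/-- The unit interval `[0,1]`. -/
local notation "𝕀" => unitInterval

/-- The lexicographic order on `[0,1] × [0,1]`:
`(x,y) ≤ (s,t)` iff `x < s`, or `x = s` and `y ≤ t`. -/
def lexLE (p q : 𝕀 × 𝕀) : Prop := p.1 < q.1 ∨ (p.1 = q.1 ∧ p.2 ≤ q.2)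

/-- The strict lexicographic order on `[0,1] × [0,1]`. -/
def lexLT (p q : 𝕀 × 𝕀) : Prop := p.1 < q.1 ∨ (p.1 = q.1 ∧ p.2 < q.2)

/-- The order topology of the lexicographic order on `[0,1] × [0,1]`, generated by the
open rays. -/
def lexTop : TopologicalSpace (𝕀 × 𝕀) :=
  TopologicalSpace.generateFrom
    ({S | ∃ a, S = {x | lexLT a x}} ∪ {S | ∃ a, S = {x | lexLT x a}})

/-!
Suprema in a lexicographic product are computed one coordinate at a time: first the supremum
of the first coordinates, then the supremum of the fibre over it. So the lexicographic square is a
complete dense linear order, the intermediate value theorem holds on it, and a continuous injection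
into a linear order must be strictly monotone or strictly antitone.
-/

section LexProduct

variable {α β : Type*}

theorem isLUB_toLex_mk [PartialOrder α] [PartialOrder β] {s : Set (α ×ₗ β)} {a : α} {b : β}
    (ha : IsLUB ((fun p ↦ (ofLex p).1) '' s) a) (hb : IsLUB {y | toLex (a, y) ∈ s} b) :
    IsLUB s (toLex (a, b)) := by
  refine ⟨fun p hp ↦ Prod.Lex.le_iff'.2 ⟨ha.1 (mem_image_of_mem _ hp), ?_⟩,
    fun q hq ↦ Prod.Lex.le_iff'.2 ⟨?_, ?_⟩⟩
  · rintro rfl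
    exact hb.1 hp
  · exact ha.2 (Prod.Lex.monotone_fst_ofLex.mem_upperBounds_image hq)
  · rintro rfl
    exact hb.2 fun y hy ↦ (Prod.Lex.le_iff'.1 (hq hy)).2 rfl

/-- Completeness of the lexicographic order on a product, which makes the intermediate value theorem
available there. The infimum is encoded as the supremum of the lower bounds, so that only suprema
have to be computed. -/
noncomputable instance lexProdCompleteLinearOrder [CompleteLinearOrder α]
    [CompleteLinearOrder β] : CompleteLinearOrder (α ×ₗ β) :=
  let supremum (s : Set (α ×ₗ β)) : α ×ₗ β :=
    let a := sSup ((fun p ↦ (ofLex p).1) '' s)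
    toLex (a, sSup {y | toLex (a, y) ∈ s})
  have isLUB_supremum (s : Set (α ×ₗ β)) : IsLUB s (supremum s) :=
    isLUB_toLex_mk (isLUB_sSup _) (isLUB_sSup _)
  { Prod.Lex.instLinearOrder α β, Prod.Lex.boundedOrder, LinearOrder.toBiheytingAlgebra _ with
    sSup := supremum
    isLUB_sSup := isLUB_supremum
    sInf := fun s ↦ supremum (lowerBounds s)
    isGLB_sInf := fun s ↦ isLUB_lowerBounds.1 (isLUB_supremum (lowerBounds s)) }

/-- The order topology of the lexicographic order; the product topology lives on `α × β` itself. -/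
instance lexProdTopologicalSpace [Preorder α] [Preorder β] : TopologicalSpace (α ×ₗ β) :=
  Preorder.topology _

instance lexProdOrderTopology [Preorder α] [Preorder β] : OrderTopology (α ×ₗ β) := ⟨rfl⟩

theorem lex_square_homeomorph_mono_or_anti_general [CompleteLinearOrder α] [DenselyOrdered α]
    [CompleteLinearOrder β] [DenselyOrdered β] {δ : Type*} [LinearOrder δ] [TopologicalSpace δ]
    [OrderClosedTopology δ] {f : α ×ₗ β → δ} (hf : Continuous f) (hinj : Function.Injective f) :
    StrictMono f ∨ StrictAnti f :=
  hf.strictMono_of_inj_boundedOrder' hinj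

end LexProduct

theorem lexLE_iff_toLex_le_toLex {p q : 𝕀 × 𝕀} : lexLE p q ↔ toLex p ≤ toLex q :=
  Prod.Lex.toLex_le_toLex.symm

theorem lexLT_iff_toLex_lt_toLex {p q : 𝕀 × 𝕀} : lexLT p q ↔ toLex p < toLex q :=
  Prod.Lex.toLex_lt_toLex.symm

theorem lexTop_eq_induced_toLex : lexTop = .induced toLex (Preorder.topology (𝕀 ×ₗ 𝕀)) := by
  rw [lexTop, Preorder.topology, induced_generateFrom_eq]
  congr 1
  ext S
  simp only [lexLT_iff_toLex_lt_toLex, mem_union, mem_ofPred_eq, mem_image]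
  constructor
  · rintro (⟨a, rfl⟩ | ⟨a, rfl⟩)
    · exact ⟨Ioi (toLex a), ⟨toLex a, .inl rfl⟩, rfl⟩
    · exact ⟨Iio (toLex a), ⟨toLex a, .inr rfl⟩, rfl⟩
  · rintro ⟨_, ⟨a, rfl | rfl⟩, rfl⟩
    · exact .inl ⟨ofLex a, rfl⟩
    · exact .inr ⟨ofLex a, rfl⟩

/-- The identification of the square carrying `lexTop` with Mathlib's lexicographic product
`𝕀 ×ₗ 𝕀` carrying its order topology. -/
def lexSquareHomeomorph : @Homeomorph (𝕀 × 𝕀) (𝕀 ×ₗ 𝕀) lexTop _ :=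
  letI := lexTop
  toLex.toHomeomorphOfIsInducing ⟨lexTop_eq_induced_toLex⟩

/-- Every self-homeomorphism of the lexicographically ordered square is order preserving
or order reversing with respect to the lexicographic order. -/
theorem lex_square_homeomorph_mono_or_anti
    (𝔬 : @Homeomorph (𝕀 × 𝕀) (𝕀 × 𝕀) lexTop lexTop) :
    (∀ x y, lexLE x y → lexLE (𝔬 x) (𝔬 y)) ∨ (∀ x y, lexLE x y → lexLE (𝔬 y) (𝔬 x)) := by
  let := lexTop
  let g := (lexSquareHomeomorph.symm.trans 𝔬).trans lexSquareHomeomorph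
  simp only [lexLE_iff_toLex_le_toLex]
  exact (lex_square_homeomorph_mono_or_anti_general g.continuous g.injective).imp
    (fun h x y hxy ↦ h.monotone hxy) (fun h x y hxy ↦ h.antitone hxy)
end

section
/- For every homeomorphism 𝔬 : 𝕆 → 𝕆 of the lexicographically ordered square and every s ∈ I, there exists t ∈ I such that 𝔬({s} × I) = {t} × I and 𝔬({(s,0), (s,1)}) = {(t,0), (t,1)}. -/
open Set

/-- The unit interval `[0,1]`. -/
local notation "𝕀" => unitInterval

/-!
A continuous image of a connected separable space in `α ×ₗ β` cannot leave a fiber `{t} × β`: it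
would cover every fiber strictly between two that it meets, so the pairwise disjoint open segments
`{c} × (⊥, ⊤)` would pull back to nonempty open sets, and only countably many `c` could occur.
But the projection to `α` is continuous, and a countable interval of a linear order contains no
nontrivial connected set. Hence a homeomorphism and its inverse map fibers into fibers, and the
induced homeomorphism between two fibers, being monotone or antitone, preserves their endpoints.
-/

open Topology TopologicalSpace

section Connectedness

variable {X α β γ : Type*} [TopologicalSpace X] [PreconnectedSpace X]

theorem not_countable_Ioo_of_continuous [LinearOrder α] [TopologicalSpace α] [OrderTopology α]
    {f : X → α} (hf : Continuous f) {u v : X} (huv : f u < f v) :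
    ¬(Ioo (f u) (f v)).Countable := by
  intro hIoo
  have hIcc : (Icc (f u) (f v)).Countable := by
    rw [← Ioo_union_both huv.le]
    exact hIoo.union (toFinite _).countable
  have := hIcc.totallySeparatedSpace
  have hsub : (range (projIcc (f u) (f v) huv.le ∘ f)).Subsingleton :=
    (isPreconnected_range (continuous_projIcc.comp hf)).subsingleton
  have heq := hsub (mem_range_self u) (mem_range_self v)
  simp only [Function.comp_apply, projIcc_left, projIcc_right, Subtype.mk.injEq] at heq
  exact huv.ne heq

theorem homeomorph_image_bot_top [ConditionallyCompleteLinearOrder β] [DenselyOrdered β]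
    [BoundedOrder β] [TopologicalSpace β] [OrderTopology β] [LinearOrder γ] [BoundedOrder γ]
    [TopologicalSpace γ] [OrderClosedTopology γ] (h : β ≃ₜ γ) :
    h '' {⊥, ⊤} = {⊥, ⊤} := by
  rw [image_pair]
  rcases h.continuous.strictMono_of_inj_boundedOrder' h.injective with hmono | hanti
  · let e : β ≃o γ := hmono.orderIsoOfSurjective h h.surjective
    rw [show h ⊥ = ⊥ from e.map_bot, show h ⊤ = ⊤ from e.map_top]
  · let e : β ≃o γᵒᵈ := StrictMono.orderIsoOfSurjective (β := γᵒᵈ) h hanti h.surjective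
    rw [show h ⊥ = ⊤ from e.map_bot, show h ⊤ = ⊥ from e.map_top, pair_comm]

end Connectedness

section LexProduct

theorem range_toLex_mk {α β : Type*} (s : α) :
    range (fun y : β ↦ toLex (s, y)) = ofLex ⁻¹' ({s} ×ˢ univ) := by
  ext p
  constructor
  · rintro ⟨y, rfl⟩
    exact ⟨rfl, trivial⟩
  · rintro ⟨rfl, -⟩
    exact ⟨(ofLex p).2, rfl⟩

variable {X α α' β : Type*} [LinearOrder α] [LinearOrder α']

section LinearOrder

variable [LinearOrder β] [TopologicalSpace (α ×ₗ β)] [OrderTopology (α ×ₗ β)]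

theorem isEmbedding_toLex_mk [TopologicalSpace β] [OrderTopology β] (s : α) :
    IsEmbedding fun y : β ↦ toLex (s, y) := by
  have hmono : StrictMono fun y : β ↦ toLex (s, y) :=
    fun _ _ hyz ↦ Prod.Lex.toLex_lt_toLex.2 (.inr ⟨rfl, hyz⟩)
  refine hmono.isEmbedding_of_ordConnected ?_
  rw [range_toLex_mk, prod_univ]
  exact ordConnected_singleton.preimage_mono Prod.Lex.monotone_fst_ofLex

variable [BoundedOrder β]

theorem continuous_fst_ofLex [TopologicalSpace α] [OrderTopology α] :
    Continuous fun p : α ×ₗ β ↦ (ofLex p).1 := by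
  refine OrderTopology.continuous_iff.2 fun a ↦ ⟨?_, ?_⟩
  · convert isOpen_Ioi (a := toLex (a, (⊤ : β))) using 1
    ext p
    simp [Prod.Lex.lt_iff]
  · convert isOpen_Iio (a := toLex (a, (⊥ : β))) using 1
    ext p
    simp [Prod.Lex.lt_iff]

variable [DenselyOrdered β] [Nontrivial β] [TopologicalSpace X] [PreconnectedSpace X]
  [SeparableSpace X] {g : X → α ×ₗ β}

theorem countable_Ioo_fst_of_continuous (hg : Continuous g) (u v : X) :
    (Ioo (ofLex (g u)).1 (ofLex (g v)).1).Countable := by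
  let segment (c : α) : Set (α ×ₗ β) := Ioo (toLex (c, ⊥)) (toLex (c, ⊤))
  have fst_eq_of_mem_segment {c : α} {p : α ×ₗ β} (hp : p ∈ segment c) : (ofLex p).1 = c :=
    le_antisymm (Prod.Lex.monotone_fst _ _ hp.2.le) (Prod.Lex.monotone_fst _ _ hp.1.le)
  refine PairwiseDisjoint.countable_of_isOpen (s := fun c ↦ g ⁻¹' segment c) ?_
    (fun c _ ↦ isOpen_Ioo.preimage hg) fun c hc ↦ ?_
  · intro c _ d _ hcd
    exact disjoint_left.2 fun x hxc hxd ↦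
      hcd ((fst_eq_of_mem_segment hxc).symm.trans (fst_eq_of_mem_segment hxd))
  · obtain ⟨m, hbot, htop⟩ := exists_between (bot_lt_top : (⊥ : β) < ⊤)
    obtain ⟨x, hx⟩ : toLex (c, m) ∈ range g := intermediate_value_univ u v hg
      ⟨Prod.Lex.le_iff.2 (.inl hc.1), Prod.Lex.le_iff.2 (.inl hc.2)⟩
    refine ⟨x, ?_⟩
    rw [mem_preimage, hx]
    exact ⟨Prod.Lex.toLex_lt_toLex.2 (.inr ⟨rfl, hbot⟩),
      Prod.Lex.toLex_lt_toLex.2 (.inr ⟨rfl, htop⟩)⟩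

theorem fst_ofLex_eq_of_continuous (hg : Continuous g) (u v : X) :
    (ofLex (g u)).1 = (ofLex (g v)).1 := by
  let _ : TopologicalSpace α := Preorder.topology α
  have : OrderTopology α := ⟨rfl⟩
  have fst_le (x y : X) : (ofLex (g x)).1 ≤ (ofLex (g y)).1 := not_lt.1 fun hlt ↦
    not_countable_Ioo_of_continuous (continuous_fst_ofLex.comp hg) hlt
      (countable_Ioo_fst_of_continuous hg y x)
  exact le_antisymm (fst_le u v) (fst_le v u)

theorem exists_eq_toLex_mk_of_continuous [TopologicalSpace β] [OrderTopology β] [Nonempty X]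
    (hg : Continuous g) : ∃ (t : α) (h : X → β), Continuous h ∧ ∀ x, g x = toLex (t, h x) := by
  obtain ⟨x₀⟩ := ‹Nonempty X›
  have hgt (x : X) : g x = toLex ((ofLex (g x₀)).1, (ofLex (g x)).2) :=
    congrArg toLex (Prod.ext (fst_ofLex_eq_of_continuous hg x x₀) rfl)
  exact ⟨_, _, (isEmbedding_toLex_mk _).continuous_iff.2 (hg.congr hgt), hgt⟩

end LinearOrder

variable [ConditionallyCompleteLinearOrder β] [DenselyOrdered β] [BoundedOrder β] [Nontrivial β]
  [TopologicalSpace β] [OrderTopology β] [SeparableSpace β]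
  [TopologicalSpace (α ×ₗ β)] [OrderTopology (α ×ₗ β)]
  [TopologicalSpace (α' ×ₗ β)] [OrderTopology (α' ×ₗ β)]

theorem exists_fiber_homeomorph (f : α ×ₗ β ≃ₜ α' ×ₗ β) (s : α) :
    ∃ (t : α') (h : β ≃ₜ β), ∀ y, f (toLex (s, y)) = toLex (t, h y) := by
  obtain ⟨t, h, h_cont, hf⟩ :=
    exists_eq_toLex_mk_of_continuous (f.continuous.comp (isEmbedding_toLex_mk s).continuous)
  obtain ⟨s', k, k_cont, hf_symm⟩ :=
    exists_eq_toLex_mk_of_continuous (f.symm.continuous.comp (isEmbedding_toLex_mk t).continuous)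
  simp only [Function.comp_apply] at hf hf_symm
  have hkh (y : β) : (s', k (h y)) = (s, y) :=
    toLex.injective (by rw [← hf_symm, ← hf, f.symm_apply_apply])
  obtain rfl : s' = s := congrArg Prod.fst (hkh ⊥)
  have hhk (z : β) : (t, h (k z)) = (t, z) :=
    toLex.injective (by rw [← hf, ← hf_symm, f.apply_symm_apply])
  exact ⟨t, ⟨⟨h, k, fun y ↦ congrArg Prod.snd (hkh y), fun z ↦ congrArg Prod.snd (hhk z)⟩,
    h_cont, k_cont⟩, hf⟩

theorem lex_square_homeomorph_maps_fibers_to_fibers_general (f : α ×ₗ β ≃ₜ α' ×ₗ β) (s : α) :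
    ∃ t : α', f '' (ofLex ⁻¹' ({s} ×ˢ univ)) = ofLex ⁻¹' ({t} ×ˢ univ) ∧
      f '' {toLex (s, ⊥), toLex (s, ⊤)} = {toLex (t, ⊥), toLex (t, ⊤)} := by
  obtain ⟨t, h, hf⟩ := exists_fiber_homeomorph f s
  refine ⟨t, ?_, ?_⟩
  · calc f '' (ofLex ⁻¹' ({s} ×ˢ univ))
        = range ((fun y ↦ toLex (t, y)) ∘ h) := by
          rw [← range_toLex_mk, ← range_comp]
          exact congrArg range (funext hf)
      _ = ofLex ⁻¹' ({t} ×ˢ univ) := by rw [h.surjective.range_comp, range_toLex_mk]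
  · calc f '' {toLex (s, ⊥), toLex (s, ⊤)}
        = (fun y ↦ toLex (t, y)) '' (h '' {⊥, ⊤}) := by simp only [image_pair, hf]
      _ = {toLex (t, ⊥), toLex (t, ⊤)} := by rw [homeomorph_image_bot_top, image_pair]

end LexProduct

/-- `𝕀 ×ₗ 𝕀` is definitionally `𝕀 × 𝕀`, so `lexTop` is also a topology on the former. -/
theorem orderTopology_lexTop : @OrderTopology (𝕀 ×ₗ 𝕀) lexTop _ := by
  let _ : TopologicalSpace (𝕀 ×ₗ 𝕀) := lexTop
  refine ⟨congrArg generateFrom ?_⟩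
  have lexLT_iff (p q : 𝕀 × 𝕀) : lexLT p q ↔ toLex p < toLex q := Prod.Lex.toLex_lt_toLex.symm
  ext S
  simp only [lexLT_iff, mem_union, mem_ofPred_eq, exists_or]
  rfl

/-- For every self-homeomorphism `𝔬` of the lexicographically ordered square and every
`s ∈ [0,1]` there is `t ∈ [0,1]` with `𝔬({s} × [0,1]) = {t} × [0,1]` and
`𝔬({(s,0),(s,1)}) = {(t,0),(t,1)}`. -/
theorem lex_square_homeomorph_maps_fibers_to_fibers
    (𝔬 : @Homeomorph (𝕀 × 𝕀) (𝕀 × 𝕀) lexTop lexTop) (s : 𝕀) :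
    ∃ t : 𝕀, ⇑𝔬 '' (({s} : Set 𝕀) ×ˢ (univ : Set 𝕀)) = ({t} : Set 𝕀) ×ˢ (univ : Set 𝕀) ∧
      ⇑𝔬 '' {((s, 0) : 𝕀 × 𝕀), (s, 1)} = {((t, 0) : 𝕀 × 𝕀), (t, 1)} := by
  let _ : TopologicalSpace (𝕀 ×ₗ 𝕀) := lexTop
  have : OrderTopology (𝕀 ×ₗ 𝕀) := orderTopology_lexTop
  exact lex_square_homeomorph_maps_fibers_to_fibers_general (α := 𝕀) (α' := 𝕀) (β := 𝕀) 𝔬 s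
end

section
/- For every homeomorphism 𝔬 : 𝕆 → 𝕆 of the lexicographically ordered square, exactly one of the following holds: (a) 𝔬(Pᵢ) = Pᵢ and 𝔬(Lᵢ) = Lᵢ for i = 1,2,3,4, and 𝔬 is order preserving with respect to the lexicographic order; or (b) 𝔬(P₁) = P₃, 𝔬(P₂) = P₄, 𝔬(P₃) = P₁, 𝔬(P₄) = P₂, 𝔬(L₁) = L₃, 𝔬(L₂) = L₄, 𝔬(L₃) = L₁, 𝔬(L₄) = L₂, and 𝔬 is order reversing with respect to the lexicographic order. -/
open Set

/-- The unit interval `[0,1]`. -/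
local notation "𝕀" => unitInterval

/-!
The lexicographic square is a complete dense linear order, so the intermediate value theorem makes
every injective continuous self-map strictly monotone or strictly antitone. Moreover columns are
visible to the topology: a column is connected and separable, whereas an order-convex set meeting
two columns contains uncountably many disjoint open intervals, one in each column in between, and
so is not separable. A homeomorphism therefore permutes the columns, and the corners and sides are
determined by the order together with the relation of lying in the same column.
-/

namespace LexProd

variable {α β γ δ : Type*}

section Completeness

theorem exists_isLUB [CompleteLattice α] [CompleteLattice β] (s : Set (α ×ₗ β)) :
    ∃ c, IsLUB s c := by
  let x := sSup ((fun p ↦ (ofLex p).1) '' s)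
  let y := sSup {b | toLex (x, b) ∈ s}
  refine ⟨toLex (x, y), fun p hp ↦ ?_, fun c hc ↦ ?_⟩
  · refine Prod.Lex.le_iff'.2 ⟨le_sSup (mem_image_of_mem _ hp), fun hpx ↦ le_sSup ?_⟩
    change toLex (x, (ofLex p).2) ∈ s
    rwa [show x = (ofLex p).1 from hpx.symm]
  · refine Prod.Lex.le_iff'.2 ⟨sSup_le ?_, fun hxc ↦ sSup_le fun b hb ↦ ?_⟩
    · rintro _ ⟨p, hp, rfl⟩
      exact Prod.Lex.monotone_fst p c (hc hp)
    · exact (Prod.Lex.le_iff'.1 (hc hb)).2 hxc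

noncomputable instance [CompleteLinearOrder α] [CompleteLinearOrder β] :
    ConditionallyCompleteLinearOrder (α ×ₗ β) where
  __ := Prod.Lex.instLinearOrder α β
  __ := (LinearOrder.toLattice : Lattice (α ×ₗ β))
  __ :=
    letI : SupSet (α ×ₗ β) := ⟨fun s ↦ (exists_isLUB s).choose⟩
    conditionallyCompleteLatticeOfLatticeOfsSup _ fun s _ _ ↦ (exists_isLUB s).choose_spec
  csSup_of_not_bddAbove s hs := absurd (OrderTop.bddAbove s) hs
  csInf_of_not_bddBelow s hs := absurd (OrderBot.bddBelow s) hs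

end Completeness

section Columns

variable [LinearOrder α] [LinearOrder β] [TopologicalSpace β] [OrderTopology β]
  [LinearOrder γ] [LinearOrder δ]
  [TopologicalSpace (α ×ₗ β)] [OrderTopology (α ×ₗ β)]
  [TopologicalSpace (γ ×ₗ δ)] [OrderTopology (γ ×ₗ δ)]

theorem continuous_toLex_mk (a : α) : Continuous fun b : β ↦ toLex (a, b) := by
  have hmono : StrictMono fun b : β ↦ toLex (a, b) := fun b b' h ↦
    Prod.Lex.toLex_lt_toLex.2 (.inr ⟨rfl, h⟩)
  refine (hmono.isEmbedding_of_ordConnected ⟨?_⟩).continuous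
  rintro _ ⟨b, rfl⟩ _ ⟨b', rfl⟩ p ⟨hbp, hpb'⟩
  have hpa : a = (ofLex p).1 :=
    le_antisymm (Prod.Lex.monotone_fst _ _ hbp) (Prod.Lex.monotone_fst _ _ hpb')
  exact ⟨(ofLex p).2, by rw [hpa]; rfl⟩

theorem fst_mem_image_of_Ioo_subset_closure [DenselyOrdered δ] [Nontrivial δ]
    {c : Set (γ ×ₗ δ)} {x : γ} (hx : ∀ y y' : δ, Ioo (toLex (x, y)) (toLex (x, y')) ⊆ closure c) :
    x ∈ (fun p ↦ (ofLex p).1) '' c := by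
  obtain ⟨y, y', hy⟩ := exists_pair_lt δ
  obtain ⟨z, hyz, hzy'⟩ := exists_between hy
  have hz : toLex (x, z) ∈ Ioo (toLex (x, y)) (toLex (x, y')) :=
    ⟨Prod.Lex.toLex_lt_toLex.2 (.inr ⟨rfl, hyz⟩), Prod.Lex.toLex_lt_toLex.2 (.inr ⟨rfl, hzy'⟩)⟩
  obtain ⟨d, ⟨hyd, hdy'⟩, hdc⟩ := mem_closure_iff.1 (hx y y' hz) _ isOpen_Ioo hz
  exact ⟨d, hdc, le_antisymm (Prod.Lex.monotone_fst _ _ hdy'.le)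
    (Prod.Lex.monotone_fst _ _ hyd.le)⟩

theorem fst_eq_of_ordConnected_of_isSeparable [DenselyOrdered δ] [Nontrivial δ]
    (hγ : ∀ x y : γ, x < y → ¬ (Ioo x y).Countable) {s : Set (γ ×ₗ δ)} (hconn : s.OrdConnected)
    (hsep : TopologicalSpace.IsSeparable s) {p q : γ ×ₗ δ} (hp : p ∈ s) (hq : q ∈ s) :
    (ofLex p).1 = (ofLex q).1 := by
  wlog hlt : (ofLex p).1 < (ofLex q).1 generalizing p q
  · by_contra hne
    exact hne (this hq hp (lt_of_le_of_ne (not_lt.1 hlt) (Ne.symm hne))).symm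
  obtain ⟨c, hc, hsc⟩ := hsep
  refine absurd ((hc.image fun d ↦ (ofLex d).1).mono fun x hx ↦ ?_) (hγ _ _ hlt)
  refine fst_mem_image_of_Ioo_subset_closure fun y y' z hz ↦ hsc (hconn.out hp hq ⟨?_, ?_⟩)
  · exact (Prod.Lex.lt_iff.2 (.inl hx.1)).le.trans hz.1.le
  · exact hz.2.le.trans (Prod.Lex.lt_iff.2 (.inl hx.2)).le

theorem fst_map_eq_of_continuous [PreconnectedSpace β] [TopologicalSpace.SeparableSpace β]
    [DenselyOrdered δ] [Nontrivial δ] (hγ : ∀ x y : γ, x < y → ¬ (Ioo x y).Countable)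
    {f : α ×ₗ β → γ ×ₗ δ} (hf : Continuous f) {p q : α ×ₗ β}
    (hpq : (ofLex p).1 = (ofLex q).1) : (ofLex (f p)).1 = (ofLex (f q)).1 := by
  have hcont : Continuous fun b : β ↦ f (toLex ((ofLex p).1, b)) := hf.comp (continuous_toLex_mk _)
  refine fst_eq_of_ordConnected_of_isSeparable hγ (isPreconnected_range hcont).ordConnected
    (TopologicalSpace.isSeparable_range hcont) ⟨(ofLex p).2, rfl⟩ ⟨(ofLex q).2, ?_⟩
  rw [hpq]
  rfl

end Columns

section Sides

/-- `f` maps the columns of one lexicographic product bijectively onto those of another, where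
a column is the set of points with a given first coordinate. -/
structure MapsColumns (f : α ×ₗ β → γ ×ₗ δ) : Prop where
  surjective : Function.Surjective f
  fst_eq_iff (p q : α ×ₗ β) : (ofLex (f p)).1 = (ofLex (f q)).1 ↔ (ofLex p).1 = (ofLex q).1

section

variable [PartialOrder α] [PartialOrder β] (p : α ×ₗ β)

theorem fst_eq_bot_iff [OrderBot α] :
    (ofLex p).1 = ⊥ ↔ ∀ q : α ×ₗ β, (ofLex q).1 = (ofLex p).1 ∨ p ≤ q := by
  refine ⟨fun hp q ↦ ?_, fun h ↦ ?_⟩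
  · rw [hp, Prod.Lex.le_iff, hp, bot_lt_iff_ne_bot]
    tauto
  · rcases h (toLex (⊥, (ofLex p).2)) with h | h
    · exact h.symm
    · exact le_bot_iff.1 (Prod.Lex.monotone_fst _ _ h)

theorem fst_eq_top_iff [OrderTop α] :
    (ofLex p).1 = ⊤ ↔ ∀ q : α ×ₗ β, (ofLex q).1 = (ofLex p).1 ∨ q ≤ p := by
  refine ⟨fun hp q ↦ ?_, fun h ↦ ?_⟩
  · rw [hp, Prod.Lex.le_iff, hp, lt_top_iff_ne_top]
    tauto
  · rcases h (toLex (⊤, (ofLex p).2)) with h | h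
    · exact h.symm
    · exact top_le_iff.1 (Prod.Lex.monotone_fst _ _ h)

theorem snd_eq_bot_iff [OrderBot β] :
    (ofLex p).2 = ⊥ ↔ ∀ q : α ×ₗ β, (ofLex q).1 = (ofLex p).1 → p ≤ q := by
  refine ⟨fun hp q hq ↦ Prod.Lex.le_iff.2 (.inr ⟨hq.symm, hp ▸ bot_le⟩), fun h ↦ ?_⟩
  exact le_bot_iff.1 ((Prod.Lex.le_iff'.1 (h (toLex ((ofLex p).1, ⊥)) rfl)).2 rfl)

theorem snd_eq_top_iff [OrderTop β] :
    (ofLex p).2 = ⊤ ↔ ∀ q : α ×ₗ β, (ofLex q).1 = (ofLex p).1 → q ≤ p := by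
  refine ⟨fun hp q hq ↦ Prod.Lex.le_iff.2 (.inr ⟨hq, hp ▸ le_top⟩), fun h ↦ ?_⟩
  exact top_le_iff.1 ((Prod.Lex.le_iff'.1 (h (toLex ((ofLex p).1, ⊤)) rfl)).2 rfl)

end

namespace MapsColumns

variable [LinearOrder α] [LinearOrder β] [PartialOrder γ] [PartialOrder δ]
  {f : α ×ₗ β → γ ×ₗ δ}

theorem fst_eq_bot_iff_of_strictMono [OrderBot α] [OrderBot γ] (hf : MapsColumns f)
    (hmono : StrictMono f) (p : α ×ₗ β) :
    (ofLex (f p)).1 = ⊥ ↔ (ofLex p).1 = ⊥ := by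
  simp only [LexProd.fst_eq_bot_iff, hf.surjective.forall, hf.fst_eq_iff, hmono.le_iff_le]

theorem fst_eq_top_iff_of_strictMono [OrderTop α] [OrderTop γ] (hf : MapsColumns f)
    (hmono : StrictMono f) (p : α ×ₗ β) :
    (ofLex (f p)).1 = ⊤ ↔ (ofLex p).1 = ⊤ := by
  simp only [LexProd.fst_eq_top_iff, hf.surjective.forall, hf.fst_eq_iff, hmono.le_iff_le]

theorem snd_eq_bot_iff_of_strictMono [OrderBot β] [OrderBot δ] (hf : MapsColumns f)
    (hmono : StrictMono f) (p : α ×ₗ β) :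
    (ofLex (f p)).2 = ⊥ ↔ (ofLex p).2 = ⊥ := by
  simp only [LexProd.snd_eq_bot_iff, hf.surjective.forall, hf.fst_eq_iff, hmono.le_iff_le]

theorem snd_eq_top_iff_of_strictMono [OrderTop β] [OrderTop δ] (hf : MapsColumns f)
    (hmono : StrictMono f) (p : α ×ₗ β) :
    (ofLex (f p)).2 = ⊤ ↔ (ofLex p).2 = ⊤ := by
  simp only [LexProd.snd_eq_top_iff, hf.surjective.forall, hf.fst_eq_iff, hmono.le_iff_le]

theorem fst_eq_bot_iff_of_strictAnti [OrderTop α] [OrderBot γ] (hf : MapsColumns f)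
    (hanti : StrictAnti f) (p : α ×ₗ β) :
    (ofLex (f p)).1 = ⊥ ↔ (ofLex p).1 = ⊤ := by
  simp only [LexProd.fst_eq_bot_iff, LexProd.fst_eq_top_iff, hf.surjective.forall, hf.fst_eq_iff,
    hanti.le_iff_ge]

theorem fst_eq_top_iff_of_strictAnti [OrderBot α] [OrderTop γ] (hf : MapsColumns f)
    (hanti : StrictAnti f) (p : α ×ₗ β) :
    (ofLex (f p)).1 = ⊤ ↔ (ofLex p).1 = ⊥ := by
  simp only [LexProd.fst_eq_bot_iff, LexProd.fst_eq_top_iff, hf.surjective.forall, hf.fst_eq_iff,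
    hanti.le_iff_ge]

theorem snd_eq_bot_iff_of_strictAnti [OrderTop β] [OrderBot δ] (hf : MapsColumns f)
    (hanti : StrictAnti f) (p : α ×ₗ β) :
    (ofLex (f p)).2 = ⊥ ↔ (ofLex p).2 = ⊤ := by
  simp only [LexProd.snd_eq_bot_iff, LexProd.snd_eq_top_iff, hf.surjective.forall, hf.fst_eq_iff,
    hanti.le_iff_ge]

theorem snd_eq_top_iff_of_strictAnti [OrderBot β] [OrderTop δ] (hf : MapsColumns f)
    (hanti : StrictAnti f) (p : α ×ₗ β) :
    (ofLex (f p)).2 = ⊤ ↔ (ofLex p).2 = ⊥ := by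
  simp only [LexProd.snd_eq_bot_iff, LexProd.snd_eq_top_iff, hf.surjective.forall, hf.fst_eq_iff,
    hanti.le_iff_ge]

end MapsColumns

theorem image_prod_eq_prod {f : α × β → γ × δ} (hf : Function.Surjective f) {s : Set α} {t : Set β}
    {s' : Set γ} {t' : Set δ} (hs : ∀ p, (f p).1 ∈ s' ↔ p.1 ∈ s)
    (ht : ∀ p, (f p).2 ∈ t' ↔ p.2 ∈ t) :
    f '' (s ×ˢ t) = s' ×ˢ t' := by
  have hpre : s ×ˢ t = f ⁻¹' (s' ×ˢ t') := by
    ext p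
    simp only [mem_prod, mem_preimage, hs, ht]
  rw [hpre, image_preimage_eq _ hf]

end Sides

end LexProd

section LexSquare

theorem unitInterval_mem_Ioo_iff (x : 𝕀) : x ∈ Ioo 0 1 ↔ x ≠ 0 ∧ x ≠ 1 := by
  rw [mem_Ioo, unitInterval.pos_iff_ne_zero, unitInterval.lt_one_iff_ne_one]

theorem not_countable_unitInterval_Ioo (x y : 𝕀) (hxy : x < y) : ¬ (Ioo x y).Countable := by
  intro hcount
  have himage : Subtype.val '' Ioo x y = Ioo (x : ℝ) y := by
    ext z
    exact ⟨by rintro ⟨w, hw, rfl⟩; exact hw, fun hz ↦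
      ⟨⟨z, x.2.1.trans hz.1.le, hz.2.le.trans y.2.2⟩, hz, rfl⟩⟩
  have hreal : (Ioo (x : ℝ) y).Countable := himage ▸ hcount.image _
  rw [← Cardinal.le_aleph0_iff_set_countable, Cardinal.mk_Ioo_real hxy] at hreal
  exact hreal.not_gt Cardinal.aleph0_lt_continuum

instance : TopologicalSpace (𝕀 ×ₗ 𝕀) := lexTop

instance : OrderTopology (𝕀 ×ₗ 𝕀) where
  topology_eq_generate_intervals := by
    have hIoi (a : 𝕀 × 𝕀) : {x | lexLT a x} = Ioi (toLex a) :=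
      ext fun _ ↦ Prod.Lex.toLex_lt_toLex.symm
    have hIio (a : 𝕀 × 𝕀) : {x | lexLT x a} = Iio (toLex a) :=
      ext fun _ ↦ Prod.Lex.toLex_lt_toLex.symm
    change lexTop = _
    rw [lexTop]
    congr 1
    ext s
    simp only [hIoi, hIio, mem_union, mem_ofPred_eq, ← exists_or]
    exact Iff.rfl

theorem mapsColumns_homeomorph (h : 𝕀 ×ₗ 𝕀 ≃ₜ 𝕀 ×ₗ 𝕀) : LexProd.MapsColumns h where
  surjective := h.surjective
  fst_eq_iff p q := by
    refine ⟨fun hpq ↦ ?_,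
      LexProd.fst_map_eq_of_continuous not_countable_unitInterval_Ioo h.continuous⟩
    simpa only [Homeomorph.symm_apply_apply] using
      LexProd.fst_map_eq_of_continuous not_countable_unitInterval_Ioo h.symm.continuous hpq

theorem lexLE_iff_toLex_le (p q : 𝕀 × 𝕀) : lexLE p q ↔ toLex p ≤ toLex q :=
  Prod.Lex.toLex_le_toLex.symm

variable (𝔬 : @Homeomorph (𝕀 × 𝕀) (𝕀 × 𝕀) lexTop lexTop)

/-- A self-homeomorphism of the square for `lexTop`, viewed on Mathlib's lexicographic product
`𝕀 ×ₗ 𝕀`, a type synonym of `𝕀 × 𝕀`, so that order and topology are found by instance search. -/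
def lexHomeomorph : 𝕀 ×ₗ 𝕀 ≃ₜ 𝕀 ×ₗ 𝕀 := 𝔬

theorem fixes_corners_and_sides_of_strictMono (h : StrictMono (lexHomeomorph 𝔬)) :
    𝔬 P₁ = P₁ ∧ 𝔬 P₂ = P₂ ∧ 𝔬 P₃ = P₃ ∧ 𝔬 P₄ = P₄ ∧
      ⇑𝔬 '' L₁ = L₁ ∧ ⇑𝔬 '' L₂ = L₂ ∧ ⇑𝔬 '' L₃ = L₃ ∧ ⇑𝔬 '' L₄ = L₄ ∧
      ∀ x y, lexLE x y → lexLE (𝔬 x) (𝔬 y) := by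
  have hcol := mapsColumns_homeomorph (lexHomeomorph 𝔬)
  have hsurj : Function.Surjective 𝔬 := hcol.surjective
  have left : ∀ p, (𝔬 p).1 = 0 ↔ p.1 = 0 := hcol.fst_eq_bot_iff_of_strictMono h
  have right : ∀ p, (𝔬 p).1 = 1 ↔ p.1 = 1 := hcol.fst_eq_top_iff_of_strictMono h
  have bottom : ∀ p, (𝔬 p).2 = 0 ↔ p.2 = 0 := hcol.snd_eq_bot_iff_of_strictMono h
  have top : ∀ p, (𝔬 p).2 = 1 ↔ p.2 = 1 := hcol.snd_eq_top_iff_of_strictMono h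
  have inner_fst (p) : (𝔬 p).1 ∈ Ioo 0 1 ↔ p.1 ∈ Ioo 0 1 := by
    simp only [unitInterval_mem_Ioo_iff, ne_eq, left, right]
  have inner_snd (p) : (𝔬 p).2 ∈ Ioo 0 1 ↔ p.2 ∈ Ioo 0 1 := by
    simp only [unitInterval_mem_Ioo_iff, ne_eq, bottom, top]
  exact ⟨Prod.ext ((left _).2 rfl) ((bottom _).2 rfl), Prod.ext ((left _).2 rfl) ((top _).2 rfl),
    Prod.ext ((right _).2 rfl) ((top _).2 rfl), Prod.ext ((right _).2 rfl) ((bottom _).2 rfl),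
    LexProd.image_prod_eq_prod hsurj left inner_snd, LexProd.image_prod_eq_prod hsurj inner_fst top,
    LexProd.image_prod_eq_prod hsurj right inner_snd,
    LexProd.image_prod_eq_prod hsurj inner_fst bottom,
    fun x y hxy ↦ (lexLE_iff_toLex_le _ _).2 (h.monotone ((lexLE_iff_toLex_le x y).1 hxy))⟩

theorem swaps_corners_and_sides_of_strictAnti (h : StrictAnti (lexHomeomorph 𝔬)) :
    𝔬 P₁ = P₃ ∧ 𝔬 P₂ = P₄ ∧ 𝔬 P₃ = P₁ ∧ 𝔬 P₄ = P₂ ∧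
      ⇑𝔬 '' L₁ = L₃ ∧ ⇑𝔬 '' L₂ = L₄ ∧ ⇑𝔬 '' L₃ = L₁ ∧ ⇑𝔬 '' L₄ = L₂ ∧
      ∀ x y, lexLE x y → lexLE (𝔬 y) (𝔬 x) := by
  have hcol := mapsColumns_homeomorph (lexHomeomorph 𝔬)
  have hsurj : Function.Surjective 𝔬 := hcol.surjective
  have left : ∀ p, (𝔬 p).1 = 0 ↔ p.1 = 1 := hcol.fst_eq_bot_iff_of_strictAnti h
  have right : ∀ p, (𝔬 p).1 = 1 ↔ p.1 = 0 := hcol.fst_eq_top_iff_of_strictAnti h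
  have bottom : ∀ p, (𝔬 p).2 = 0 ↔ p.2 = 1 := hcol.snd_eq_bot_iff_of_strictAnti h
  have top : ∀ p, (𝔬 p).2 = 1 ↔ p.2 = 0 := hcol.snd_eq_top_iff_of_strictAnti h
  have inner_fst (p) : (𝔬 p).1 ∈ Ioo 0 1 ↔ p.1 ∈ Ioo 0 1 := by
    simp only [unitInterval_mem_Ioo_iff, ne_eq, left, right, and_comm]
  have inner_snd (p) : (𝔬 p).2 ∈ Ioo 0 1 ↔ p.2 ∈ Ioo 0 1 := by
    simp only [unitInterval_mem_Ioo_iff, ne_eq, bottom, top, and_comm]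
  exact ⟨Prod.ext ((right _).2 rfl) ((top _).2 rfl), Prod.ext ((right _).2 rfl) ((bottom _).2 rfl),
    Prod.ext ((left _).2 rfl) ((bottom _).2 rfl), Prod.ext ((left _).2 rfl) ((top _).2 rfl),
    LexProd.image_prod_eq_prod hsurj right inner_snd,
    LexProd.image_prod_eq_prod hsurj inner_fst bottom,
    LexProd.image_prod_eq_prod hsurj left inner_snd, LexProd.image_prod_eq_prod hsurj inner_fst top,
    fun x y hxy ↦ (lexLE_iff_toLex_le _ _).2 (h.antitone ((lexLE_iff_toLex_le x y).1 hxy))⟩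

end LexSquare

/-- For every self-homeomorphism of the lexicographically ordered square, exactly one
of the following holds: (a) it fixes every corner `Pᵢ`, maps every side `Lᵢ` onto
itself and is order preserving; (b) it swaps `P₁ ↔ P₃`, `P₂ ↔ P₄`, `L₁ ↔ L₃`,
`L₂ ↔ L₄` and is order reversing. -/
theorem lex_square_homeomorph_dichotomy
    (𝔬 : @Homeomorph (𝕀 × 𝕀) (𝕀 × 𝕀) lexTop lexTop) :
    Xor'
      (𝔬 P₁ = P₁ ∧ 𝔬 P₂ = P₂ ∧ 𝔬 P₃ = P₃ ∧ 𝔬 P₄ = P₄ ∧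
        ⇑𝔬 '' L₁ = L₁ ∧ ⇑𝔬 '' L₂ = L₂ ∧ ⇑𝔬 '' L₃ = L₃ ∧ ⇑𝔬 '' L₄ = L₄ ∧
        ∀ x y, lexLE x y → lexLE (𝔬 x) (𝔬 y))
      (𝔬 P₁ = P₃ ∧ 𝔬 P₂ = P₄ ∧ 𝔬 P₃ = P₁ ∧ 𝔬 P₄ = P₂ ∧
        ⇑𝔬 '' L₁ = L₃ ∧ ⇑𝔬 '' L₂ = L₄ ∧ ⇑𝔬 '' L₃ = L₁ ∧ ⇑𝔬 '' L₄ = L₂ ∧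
        ∀ x y, lexLE x y → lexLE (𝔬 y) (𝔬 x)) := by
  have hne : P₁ ≠ P₃ := fun h ↦ zero_ne_one (congrArg Prod.fst h)
  rcases (lexHomeomorph 𝔬).continuous.strictMono_of_inj_boundedOrder' (lexHomeomorph 𝔬).injective
    with hmono | hanti
  · have hfix := fixes_corners_and_sides_of_strictMono 𝔬 hmono
    exact .inl ⟨hfix, fun hswap ↦ hne (hfix.1.symm.trans hswap.1)⟩
  · have hswap := swaps_corners_and_sides_of_strictAnti 𝔬 hanti
    exact .inr ⟨hswap, fun hfix ↦ hne (hfix.1.symm.trans hswap.1)⟩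
end
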